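/- arXiv:2403.17410 — 4 statements merged into one kernel-verified Lean document; each statement's English description precedes it below -/
import Mathlib

section
/- Let V be a countable type with decidable equality. Then every set function f : Finset V → ℝ is sum-decomposable via ℝ: there exist functions φ : V → ℝ and ρ : ℝ → ℝ such that f(S) = ρ(∑_{s ∈ S} φ(s)) for every finite subset S ⊆ V. -/
/-!
A family of vectors that is linearly independent over a nontrivial semiring has pairwise distinct
finite subset sums, since `∑ s ∈ S, φ s` is the combination whose coefficients form the indicator
function of `S`. A `ℚ`-basis of `ℝ` has `𝔠` elements, so any `V` with `#V ≤ 𝔠` can be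
mapped injectively into it; the subset sum then determines `S`, hence also `f S`.
-/

open Cardinal Function

theorem injective_finset_sum_of_linearIndependent {ι R M : Type*} [Semiring R] [Nontrivial R]
    [AddCommMonoid M] [Module R M] {v : ι → M} (hv : LinearIndependent R v) :
    Injective fun S : Finset ι ↦ ∑ i ∈ S, v i := by
  classical
  let coeff (S : Finset ι) : ι →₀ R := Finsupp.indicator S fun _ _ ↦ 1
  have support_coeff : LeftInverse Finsupp.support coeff := fun S ↦ by
    ext i
    simp [coeff]
  have linearCombination_coeff (S : Finset ι) :
      Finsupp.linearCombination R v (coeff S) = ∑ i ∈ S, v i := by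
    simp [coeff, Finsupp.linearCombination_apply, S.sum_attach v]
  simpa only [comp_def, linearCombination_coeff] using
    hv.finsuppLinearCombination_injective.comp support_coeff.injective

universe u w

theorem exists_linearIndependent_of_lift_mk_le_lift_rank {ι : Type u} {R : Type*} {M : Type w}
    [Semiring R] [StrongRankCondition R] [AddCommMonoid M] [Module R M] [Module.Free R M]
    (h : lift.{w} #ι ≤ lift.{u} (Module.rank R M)) :
    ∃ v : ι → M, LinearIndependent R v := by
  obtain ⟨s, ⟨b⟩⟩ := Module.Free.exists_set R M
  rw [← b.mk_eq_rank''] at h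
  obtain ⟨e⟩ := lift_mk_le'.mp h
  exact ⟨b ∘ e, b.linearIndependent.comp e e.injective⟩

theorem setFunction_sum_decomposable_general {V α : Type*} (hV : #V ≤ 𝔠) (f : Finset V → α) :
    ∃ (φ : V → ℝ) (ρ : ℝ → α), ∀ S : Finset V, f S = ρ (∑ s ∈ S, φ s) := by
  obtain ⟨φ, hφ⟩ : ∃ φ : V → ℝ, LinearIndependent ℚ φ :=
    exists_linearIndependent_of_lift_mk_le_lift_rank <| by
      simpa only [Real.rank_rat_real, lift_uzero, lift_continuum] using hV
  have : Nonempty α := ⟨f ∅⟩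
  obtain ⟨ρ, hρ⟩ := (factorsThrough_iff f).mp
    ((injective_finset_sum_of_linearIndependent hφ).factorsThrough f)
  exact ⟨φ, ρ, congrFun hρ⟩

/-- Every set function on finite subsets of a countable ground type is
sum-decomposable via ℝ: `f(S) = ρ(∑_{s ∈ S} φ(s))`. -/
theorem setFunction_sum_decomposable {V : Type*} [Countable V] [DecidableEq V]
    (f : Finset V → ℝ) :
    ∃ (φ : V → ℝ) (ρ : ℝ → ℝ), ∀ S : Finset V, f S = ρ (∑ s ∈ S, φ s) :=
  setFunction_sum_decomposable_general (mk_le_aleph0.trans aleph0_le_continuum) f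
end

section
/- Let M ∈ ℕ with M ≥ 1 and let f : [0,1]^M → ℝ be continuous and permutation invariant. Then f is continuously sum-decomposable via ℝ^{M+1}: there exist a continuous function φ : [0,1] → ℝ^{M+1} and a continuous function ρ : ℝ^{M+1} → ℝ such that f(x₁, …, x_M) = ρ(∑_{i=1}^{M} φ(x_i)) for all (x₁, …, x_M) ∈ [0,1]^M. -/
/-!
Newton's identities recover the elementary symmetric functions of `x₁, …, x_M` from the first `M`
power sums, hence (Vieta) the monic polynomial with roots `x_i`, hence the `x_i` up to order. So a
symmetric `f` is constant on the fibres of `S x = ∑ i, (x i, x i ^ 2, …, x i ^ M)`. By compactness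
`S` is a closed map, so `f` descends to a continuous function on its image, which the Tietze
extension theorem extends to the whole space.
-/

open Finset Topology

universe u v

theorem exists_equiv_comp_eq_of_map_univ_eq {α β γ : Type*} [Fintype α] [Fintype β]
    {f : α → γ} {g : β → γ} (h : univ.val.map f = univ.val.map g) : ∃ e : α ≃ β, g ∘ e = f := by
  classical
  have fiber_card (c : γ) : Fintype.card {a // f a = c} = Fintype.card {b // g b = c} := by
    have count_eq := congrArg (Multiset.count c) h
    simp only [Multiset.count_map, ← filter_val, card_val, eq_comm (a := c)] at count_eq
    rwa [Fintype.card_subtype, Fintype.card_subtype]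
  let e := Equiv.ofFiberEquiv fun c => Fintype.equivOfCardEq (fiber_card c)
  exact ⟨e, funext (Equiv.ofFiberEquiv_map _)⟩

section PowerSums

variable {ι R : Type*} [Fintype ι] [CommRing R]

theorem mul_esymm_map_univ_eq_sum (x : ι → R) (k : ℕ) :
    k * (univ.val.map x).esymm k = (-1) ^ (k + 1) *
      ∑ a ∈ antidiagonal k with a.1 < k,
        (-1) ^ a.1 * (univ.val.map x).esymm a.1 * ∑ i, x i ^ a.2 := by
  have newton := congrArg (MvPolynomial.aeval x) (MvPolynomial.mul_esymm_eq_sum ι R k)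
  simpa only [MvPolynomial.psum, MvPolynomial.aeval_esymm_eq_multiset_esymm, MvPolynomial.aeval_X,
    map_mul, map_sum, map_pow, map_neg, map_one, map_natCast] using newton

theorem esymm_map_univ_eq_of_sum_pow_eq [NoZeroDivisors R] [CharZero R] {x y : ι → R} {n : ℕ}
    (h : ∀ k < n, ∑ i, x i ^ (k + 1) = ∑ i, y i ^ (k + 1)) {k : ℕ} (hk : k ≤ n) :
    (univ.val.map x).esymm k = (univ.val.map y).esymm k := by
  induction k using Nat.strong_induction_on with
  | _ k ih =>
    obtain rfl | hpos := k.eq_zero_or_pos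
    · simp [Multiset.esymm]
    apply mul_left_cancel₀ (Nat.cast_ne_zero.mpr hpos.ne' : (k : R) ≠ 0)
    rw [mul_esymm_map_univ_eq_sum, mul_esymm_map_univ_eq_sum]
    congr 1
    refine sum_congr rfl fun ⟨i, j⟩ hij => ?_
    obtain ⟨hadd, hlt⟩ : i + j = k ∧ i < k := by simpa using hij
    obtain ⟨m, rfl⟩ : ∃ m, j = m + 1 := Nat.exists_eq_succ_of_ne_zero (by lia)
    rw [ih i hlt (by lia), h m (by lia)]

theorem multiset_eq_of_esymm_eq [IsDomain R] {s t : Multiset R} (hcard : s.card = t.card)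
    (h : ∀ k ≤ s.card, s.esymm k = t.esymm k) : s = t := by
  have prod_eq : (s.map fun a => Polynomial.X - Polynomial.C a).prod =
      (t.map fun a => Polynomial.X - Polynomial.C a).prod := by
    rw [Multiset.prod_X_sub_X_eq_sum_esymm, Multiset.prod_X_sub_X_eq_sum_esymm, ← hcard]
    exact sum_congr rfl fun k hk => by rw [h k (Nat.lt_succ_iff.mp (mem_range.mp hk))]
  rw [← Polynomial.roots_multiset_prod_X_sub_C s, prod_eq, Polynomial.roots_multiset_prod_X_sub_C]

theorem exists_perm_comp_eq_of_sum_pow_eq [IsDomain R] [CharZero R] {x y : ι → R}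
    (h : ∀ k < Fintype.card ι, ∑ i, x i ^ (k + 1) = ∑ i, y i ^ (k + 1)) :
    ∃ π : Equiv.Perm ι, y ∘ π = x := by
  apply exists_equiv_comp_eq_of_map_univ_eq
  apply multiset_eq_of_esymm_eq (by simp)
  exact fun k hk => esymm_map_univ_eq_of_sum_pow_eq h (by simpa using hk)

end PowerSums

theorem exists_continuous_comp_eq_of_isClosedMap {A : Type*} {B : Type u} {Y : Type v}
    [TopologicalSpace A] [TopologicalSpace B] [NormalSpace B] [TopologicalSpace Y]
    [TietzeExtension.{u, v} Y] {S : A → B} (hS : Continuous S) (hS_closed : IsClosedMap S)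
    {f : A → Y} (hf : Continuous f) (hfS : f.FactorsThrough S) :
    ∃ ρ : B → Y, Continuous ρ ∧ ρ ∘ S = f := by
  have kerLift_emb : IsClosedEmbedding (Setoid.kerLift S) := .of_continuous_injective_isClosedMap
    (hS.quotient_lift _) (Setoid.kerLift_injective S)
    (hS_closed.of_comp_surjective Quotient.mk_surjective continuous_quotient_mk')
  have hf_lift : Continuous (Quotient.lift (s := Setoid.ker S) f fun _ _ h => hfS h) :=
    hf.quotient_lift _
  obtain ⟨ρ, hρ⟩ := ContinuousMap.exists_extension' kerLift_emb ⟨_, hf_lift⟩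
  exact ⟨ρ, ρ.continuous, funext fun x => congrFun hρ ⟦x⟧⟩

/-- The moment curve `t ↦ (t, t², …, tᴺ)`, whose sums are the vectors of power sums. The exponents
start at `1` because the zeroth power sum is constant. -/
def momentCurve (R : Type*) [Monoid R] (N : ℕ) (t : R) : Fin N → R :=
  fun k => t ^ (k + 1 : ℕ)

theorem continuous_momentCurve (R : Type*) [Monoid R] [TopologicalSpace R] [ContinuousMul R]
    (N : ℕ) : Continuous (momentCurve R N) :=
  continuous_pi fun k => continuous_pow (k + 1 : ℕ)

theorem exists_perm_comp_eq_of_sum_momentCurve_eq {ι R : Type*} [Fintype ι] [CommRing R]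
    [IsDomain R] [CharZero R] {N : ℕ} (hN : Fintype.card ι ≤ N) {x y : ι → R}
    (h : ∑ i, momentCurve R N (x i) = ∑ i, momentCurve R N (y i)) :
    ∃ π : Equiv.Perm ι, y ∘ π = x := by
  refine exists_perm_comp_eq_of_sum_pow_eq fun k hk => ?_
  simpa only [Finset.sum_apply, momentCurve] using congrFun h ⟨k, hk.trans_le hN⟩

theorem continuous_symmetric_sum_decomposable_general {ι X : Type*} {R : Type u} {Y : Type v}
    [Fintype ι] [CommRing R] [IsDomain R] [CharZero R] [TopologicalSpace R]
    [IsTopologicalSemiring R] [TopologicalSpace.MetrizableSpace R]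
    [TopologicalSpace X] [CompactSpace X] [TopologicalSpace Y] [TietzeExtension.{u, v} Y]
    {N : ℕ} (hN : Fintype.card ι ≤ N)
    {e : X → R} (he : Continuous e) (he_inj : e.Injective)
    {f : (ι → X) → Y} (hf : Continuous f)
    (hf_inv : ∀ (π : Equiv.Perm ι) (x : ι → X), f (x ∘ π) = f x) :
    ∃ (φ : X → (Fin N → R)) (ρ : (Fin N → R) → Y),
      Continuous φ ∧ Continuous ρ ∧ ∀ x : ι → X, f x = ρ (∑ i, φ (x i)) := by
  let φ : X → (Fin N → R) := momentCurve R N ∘ e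
  let S : (ι → X) → (Fin N → R) := fun x => ∑ i, φ (x i)
  have hφ : Continuous φ := (continuous_momentCurve R N).comp he
  have hS : Continuous S := by fun_prop
  have hfS : f.FactorsThrough S := by
    intro x y hxy
    obtain ⟨π, hπ⟩ : ∃ π : Equiv.Perm ι, (e ∘ y) ∘ π = e ∘ x :=
      exists_perm_comp_eq_of_sum_momentCurve_eq hN hxy
    have hperm : y ∘ π = x := he_inj.comp_left hπ
    rw [← hperm, hf_inv]
  obtain ⟨ρ, hρ, hρS⟩ := exists_continuous_comp_eq_of_isClosedMap hS hS.isClosedMap hf hfS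
  exact ⟨φ, ρ, hφ, hρ, fun x => (congrFun hρS x).symm⟩

/-- Every continuous permutation-invariant function on `[0,1]^M` is continuously
sum-decomposable via `ℝ^{M+1}`. -/
theorem continuous_symmetric_sum_decomposable (M : ℕ) (hM : 1 ≤ M)
    (f : (Fin M → Set.Icc (0 : ℝ) 1) → ℝ)
    (hf_cont : Continuous f)
    (hf_inv : ∀ (π : Equiv.Perm (Fin M)) (x : Fin M → Set.Icc (0 : ℝ) 1),
      f (x ∘ π) = f x) :
    ∃ (φ : Set.Icc (0 : ℝ) 1 → (Fin (M + 1) → ℝ)) (ρ : (Fin (M + 1) → ℝ) → ℝ),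
      Continuous φ ∧ Continuous ρ ∧
        ∀ x : Fin M → Set.Icc (0 : ℝ) 1, f x = ρ (∑ i, φ (x i)) :=
  continuous_symmetric_sum_decomposable_general (by simp) continuous_subtype_val
    Subtype.val_injective hf_cont hf_inv
end

section
/- Let M, N ∈ ℕ with M > N ≥ 1. Then there exists a continuous permutation-invariant function f : ℝ^M → ℝ that is not continuously sum-decomposable via ℝ^N: for every pair of continuous functions φ : ℝ → ℝ^N and ρ : ℝ^N → ℝ there exists x ∈ ℝ^M with f(x) ≠ ρ(∑_{i=1}^{M} φ(x_i)). -/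
/-!
The maximum is not sum-decomposable. If `max x = ρ (∑ φ (x i))`, then equal sums force equal maxima;
overwriting the largest entries of two ordered tuples, one position at a time, shows that
`x ↦ ∑ φ (x i)` is injective on ordered tuples. These have nonempty interior in `ℝ^M`, so
invariance of dimension makes the dimension of the latent space at least `M`.

Invariance of dimension follows from Brouwer's fixed point theorem, which is reduced to the
nonexistence of a `C^1` retraction onto the sphere and then to a comparison of volumes (Milnor,
Rogers).
-/

open Function MeasureTheory Metric Module Set Topology
open scoped NNReal Polynomial

section Determinant

variable {E : Type*} [NormedAddCommGroup E] [NormedSpace ℝ E]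

lemma eval_charpoly_neg_eq_det_smul_id_add [FiniteDimensional ℝ E] (A : E →L[ℝ] E) (s : ℝ) :
    (LinearMap.charpoly (-(A : E →ₗ[ℝ] E))).eval s = (s • ContinuousLinearMap.id ℝ E + A).det := by
  rw [LinearMap.eval_charpoly, sub_neg_eq_add, ContinuousLinearMap.det]
  rfl

lemma det_smul_id_add_ne_zero {A : E →L[ℝ] E} {s : ℝ} (hs : ‖A‖ < s) :
    (s • ContinuousLinearMap.id ℝ E + A).det ≠ 0 := by
  intro hdet
  obtain ⟨v, hv, hv_ne⟩ :=
    (Submodule.ne_bot_iff _).1 (LinearMap.bot_lt_ker_of_det_eq_zero hdet).ne'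
  have hsv : s • v = -A v := eq_neg_of_add_eq_zero_left (by simpa using hv)
  have hle : s * ‖v‖ ≤ ‖A‖ * ‖v‖ := calc
    s * ‖v‖ ≤ ‖s • v‖ := by rw [norm_smul]; gcongr; exact Real.le_norm_self s
    _ = ‖A v‖ := by rw [hsv, norm_neg]
    _ ≤ ‖A‖ * ‖v‖ := A.le_opNorm v
  exact hs.not_ge (le_of_mul_le_mul_right hle (norm_pos_iff.2 hv_ne))

lemma det_smul_id_add_pos {A : E →L[ℝ] E} {s : ℝ} (hs : ‖A‖ < s) :
    0 < (s • ContinuousLinearMap.id ℝ E + A).det := by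
  have hs_pos : 0 < s := (norm_nonneg A).trans_lt hs
  let g : ℝ → ℝ := fun t ↦ (s • ContinuousLinearMap.id ℝ E + t • A).det
  have hg : Continuous g := ContinuousLinearMap.continuous_det.comp (by fun_prop)
  have hg_zero : 0 < g 0 := by
    simpa [g, ContinuousLinearMap.det] using pow_pos hs_pos (finrank ℝ E)
  have hg_ne : ∀ t ∈ Icc (0 : ℝ) 1, g t ≠ 0 := fun t ht ↦ by
    refine det_smul_id_add_ne_zero (lt_of_le_of_lt ?_ hs)
    rw [norm_smul, Real.norm_of_nonneg ht.1]
    exact mul_le_of_le_one_left (norm_nonneg A) ht.2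
  by_contra! hdet
  have hg_one : g 1 ≤ 0 := by simpa only [g, one_smul] using hdet
  obtain ⟨t, ht, hgt⟩ := intermediate_value_Icc' zero_le_one hg.continuousOn ⟨hg_one, hg_zero.le⟩
  exact hg_ne t ht hgt

end Determinant

/-- The candidate is the Lagrange interpolation of the integrals at `0, 1, …, n - 1`. -/
lemma exists_polynomial_eval_eq_integral {α 𝕜 : Type*} [MeasurableSpace α] [RCLike 𝕜]
    {μ : Measure α} {p : α → 𝕜[X]} {n : ℕ} (hdeg : ∀ x, (p x).degree < n)
    (hint : ∀ s, Integrable (fun x ↦ (p x).eval s) μ) :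
    ∃ q : 𝕜[X], ∀ s, q.eval s = ∫ x, (p x).eval s ∂μ := by
  let v : ℕ → 𝕜 := Nat.cast
  let S := Finset.range n
  refine ⟨Lagrange.interpolate S v fun j ↦ ∫ x, (p x).eval (v j) ∂μ, fun s ↦ ?_⟩
  have hp : ∀ x, (p x).eval s = ∑ j ∈ S, (p x).eval (v j) * (Lagrange.basis S v j).eval s :=
    fun x ↦ by
      conv_lhs => rw [Lagrange.eq_interpolate (s := S) (v := v) (f := p x) Nat.cast_injective.injOn
        (by simpa only [S, Finset.card_range] using hdeg x)]
      simp only [Lagrange.interpolate_apply, Polynomial.eval_finsetSum, Polynomial.eval_mul,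
        Polynomial.eval_C]
  simp only [hp, Lagrange.interpolate_apply, Polynomial.eval_finsetSum, Polynomial.eval_mul,
    Polynomial.eval_C]
  rw [integral_finsetSum _ fun j _ ↦ (hint (v j)).mul_const _]
  simp only [integral_mul_const]

section SmulAdd

variable {E : Type*} [NormedAddCommGroup E] [NormedSpace ℝ E] {w : E → E} {K : ℝ≥0} {s : ℝ}

lemma injOn_smul_add {t : Set E} (hw : LipschitzOnWith K w t) (hs : K < s) :
    InjOn (fun x ↦ s • x + w x) t := by
  intro x hx y hy hxy
  by_contra hne
  have hsub : s • (x - y) = w y - w x := by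
    simpa only [smul_sub, sub_eq_sub_iff_add_eq_add, add_comm (w y)] using hxy
  have hle : s * dist x y ≤ K * dist x y := calc
    s * dist x y ≤ ‖s • (x - y)‖ := by
      rw [norm_smul, dist_eq_norm]; gcongr; exact Real.le_norm_self s
    _ = dist (w x) (w y) := by rw [hsub, dist_comm, dist_eq_norm]
    _ ≤ K * dist x y := hw.dist_le_mul x hx y hy
  exact hs.not_ge (le_of_mul_le_mul_right hle (dist_pos.2 hne))

lemma surjOn_smul_add_closedBall [CompleteSpace E] {c : E} {R : ℝ} (hR : 0 ≤ R)
    (hw : LipschitzOnWith K w (closedBall c R)) (hs : 0 < s) :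
    SurjOn (fun x ↦ s • x + w x) (closedBall c R)
      (closedBall (s • c + w c) ((s - K) * R)) := by
  have happrox : ApproximatesLinearOn (fun x ↦ s • x + w x) (s • ContinuousLinearMap.id ℝ E)
      (closedBall c R) K := fun x hx y hy ↦ by
    have hsub : s • x + w x - (s • y + w y) - (s • ContinuousLinearMap.id ℝ E) (x - y) =
        w x - w y := by
      change s • x + w x - (s • y + w y) - s • (x - y) = w x - w y
      module
    rw [hsub]
    exact hw.norm_sub_le hx hy
  let inv : (s • ContinuousLinearMap.id ℝ E).NonlinearRightInverse :=
    { toFun := fun y ↦ s⁻¹ • y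
      nnnorm := ‖s⁻¹‖₊
      bound' := fun y ↦ (norm_smul s⁻¹ y).le
      right_inv' := fun y ↦ smul_inv_smul₀ hs.ne' y }
  have hinv : ((inv.nnnorm : ℝ)⁻¹ - K) = s - K := by
    simp [inv, abs_of_pos hs]
  rw [← hinv]
  exact happrox.surjOn_closedBall_of_nonlinearRightInverse inv hR Subset.rfl

lemma image_smul_add_closedBall [CompleteSpace E] {r : ℝ} (hw_norm : ∀ x, ‖w x‖ = 1)
    (hw_out : ∀ x, r ≤ ‖x‖ → w x = NormedSpace.normalize x) (hr : 0 ≤ r)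
    (hw : LipschitzOnWith K w (closedBall 0 (r + 1))) (hs : K * (r + 1) + 2 ≤ s) :
    (fun x ↦ s • x + w x) '' closedBall 0 r = closedBall 0 (s * r + 1) := by
  have hs_pos : 0 < s := by have := K.coe_nonneg; nlinarith
  apply Subset.antisymm
  · rintro _ ⟨x, hx, rfl⟩
    rw [mem_closedBall_zero_iff] at hx ⊢
    calc ‖s • x + w x‖ ≤ ‖s • x‖ + ‖w x‖ := norm_add_le _ _
      _ = s * ‖x‖ + 1 := by rw [norm_smul, hw_norm, Real.norm_of_nonneg hs_pos.le]
      _ ≤ s * r + 1 := by gcongr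
  · intro y hy
    rw [mem_closedBall_zero_iff] at hy
    have hy_mem : y ∈ closedBall (s • 0 + w 0) ((s - K) * (r + 1)) := by
      rw [smul_zero, zero_add, mem_closedBall, dist_eq_norm]
      calc ‖y - w 0‖ ≤ ‖y‖ + ‖w 0‖ := norm_sub_le _ _
        _ ≤ s * r + 1 + 1 := by rw [hw_norm]; gcongr
        _ ≤ (s - K) * (r + 1) := by linarith
    obtain ⟨x, -, rfl⟩ := surjOn_smul_add_closedBall (by positivity) hw hs_pos hy_mem
    refine mem_image_of_mem _ (mem_closedBall_zero_iff.2 ?_)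
    by_contra! hx
    have hx_pos : 0 < ‖x‖ := hr.trans_lt hx
    have hnorm : ‖s • x + w x‖ = s * ‖x‖ + 1 := by
      rw [hw_out x hx.le, NormedSpace.normalize, ← add_smul, norm_smul,
        Real.norm_of_nonneg (by positivity), add_mul, inv_mul_cancel₀ hx_pos.ne']
    nlinarith

end SmulAdd

section Integral

variable {E : Type*} [NormedAddCommGroup E] [NormedSpace ℝ E] [FiniteDimensional ℝ E]

lemma exists_polynomial_eval_eq_setIntegral_det {X : Type*} [TopologicalSpace X]
    [T2Space X] [MeasurableSpace X] [OpensMeasurableSpace X] {μ : Measure X}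
    [IsFiniteMeasureOnCompacts μ]
    {A : X → E →L[ℝ] E} (hA : Continuous A) {t : Set X} (ht : IsCompact t) :
    ∃ q : ℝ[X], ∀ s, q.eval s = ∫ x in t, (s • ContinuousLinearMap.id ℝ E + A x).det ∂μ := by
  have hdeg : ∀ x, (LinearMap.charpoly (-(A x : E →ₗ[ℝ] E))).degree
      < ((finrank ℝ E + 1 : ℕ) : WithBot ℕ) := fun x ↦ by
    rw [Polynomial.degree_eq_natDegree (LinearMap.charpoly_monic _).ne_zero,
      LinearMap.charpoly_natDegree]
    exact_mod_cast Nat.lt_succ_self _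
  obtain ⟨q, hq⟩ := exists_polynomial_eval_eq_integral (μ := μ.restrict t) hdeg fun s ↦ by
    simp only [eval_charpoly_neg_eq_det_smul_id_add]
    have hdet : Continuous fun x ↦ (s • ContinuousLinearMap.id ℝ E + A x).det :=
      ContinuousLinearMap.continuous_det.comp (by fun_prop)
    exact hdet.continuousOn.integrableOn_compact ht
  exact ⟨q, fun s ↦ by simp only [hq, eval_charpoly_neg_eq_det_smul_id_add]⟩

lemma setIntegral_det_smul_id_add_fderiv [MeasurableSpace E] [BorelSpace E] (μ : Measure E)
    [μ.IsAddHaarMeasure] {w : E → E} {K : ℝ≥0} {r s : ℝ} (hw_diff : Differentiable ℝ w)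
    (hw_norm : ∀ x, ‖w x‖ = 1) (hw_out : ∀ x, r ≤ ‖x‖ → w x = NormedSpace.normalize x)
    (hr : 0 ≤ r) (hw : LipschitzOnWith K w (closedBall 0 (r + 1))) (hs : K * (r + 1) + 2 ≤ s) :
    ∫ x in closedBall 0 r, (s • ContinuousLinearMap.id ℝ E + fderiv ℝ w x).det ∂μ =
      (s * r + 1) ^ finrank ℝ E * μ.real (closedBall 0 1) := by
  have hKs : K < s := by nlinarith [K.coe_nonneg]
  have hs_pos : 0 < s := K.coe_nonneg.trans_lt hKs
  have hderiv : ∀ x ∈ closedBall (0 : E) r, HasFDerivWithinAt (fun x ↦ s • x + w x)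
      (s • ContinuousLinearMap.id ℝ E + fderiv ℝ w x) (closedBall 0 r) x := fun x _ ↦
    (((hasFDerivAt_id x).const_smul s).add (hw_diff x).hasFDerivAt).hasFDerivWithinAt
  have hinj : InjOn (fun x ↦ s • x + w x) (closedBall 0 r) :=
    injOn_smul_add (hw.mono (closedBall_subset_closedBall (by linarith))) hKs
  have hdet : ∀ x ∈ closedBall (0 : E) r,
      0 < (s • ContinuousLinearMap.id ℝ E + fderiv ℝ w x).det := fun x hx ↦ by
    have hnhds : closedBall (0 : E) (r + 1) ∈ 𝓝 x := closedBall_mem_nhds_of_mem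
      (closedBall_subset_ball (lt_add_one r) hx)
    exact det_smul_id_add_pos ((norm_fderiv_le_of_lipschitzOn ℝ hnhds hw).trans_lt hKs)
  calc ∫ x in closedBall 0 r, (s • ContinuousLinearMap.id ℝ E + fderiv ℝ w x).det ∂μ
      = ∫ x in closedBall 0 r,
          |(s • ContinuousLinearMap.id ℝ E + fderiv ℝ w x).det| • (1 : ℝ) ∂μ :=
        setIntegral_congr_fun measurableSet_closedBall fun x hx ↦ by
          simp only [abs_of_pos (hdet x hx), smul_eq_mul, mul_one]
    _ = ∫ _ in (fun x ↦ s • x + w x) '' closedBall 0 r, (1 : ℝ) ∂μ :=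
        (integral_image_eq_integral_abs_det_fderiv_smul μ measurableSet_closedBall hderiv hinj
          fun _ ↦ 1).symm
    _ = μ.real (closedBall 0 (s * r + 1)) := by
        rw [image_smul_add_closedBall hw_norm hw_out hr hw hs, setIntegral_const, smul_eq_mul,
          mul_one]
    _ = (s * r + 1) ^ finrank ℝ E * μ.real (closedBall 0 1) :=
        Measure.addHaar_real_closedBall' μ 0 (by positivity)

end Integral

section InnerProductSpace

variable {E : Type*} [NormedAddCommGroup E] [InnerProductSpace ℝ E] [FiniteDimensional ℝ E]

lemma det_eq_zero_of_eventually_norm_eq {w : E → E} {w' : E →L[ℝ] E} {x : E}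
    (hw : HasFDerivAt w w' x) (hnorm : ∀ᶠ y in 𝓝 x, ‖w y‖ = ‖w x‖) (hx : w x ≠ 0) :
    w'.det = 0 := by
  by_contra hdet
  obtain ⟨v, hv⟩ : ∃ v, w' v = w x :=
    (LinearMap.equivOfDetNeZero (w' : E →ₗ[ℝ] E) hdet).surjective (w x)
  have hconst : HasFDerivAt (fun y ↦ ‖w y‖ ^ 2) (0 : E →L[ℝ] ℝ) x :=
    (hasFDerivAt_const (‖w x‖ ^ 2) x).congr_of_eventuallyEq
      (hnorm.mono fun y hy ↦ by simp only [hy])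
  have hinner : 2 • inner ℝ (w x) (w' v) = 0 := DFunLike.congr_fun (hw.norm_sq.unique hconst) v
  rw [hv, real_inner_self_eq_norm_sq] at hinner
  simp [hx] at hinner

/-- `∫ det (s • id + Dw)` over the ball of radius `r` is a polynomial in `s`. It vanishes at
`s = 0` because `w` has values in the sphere, but for large `s` it is the volume of the ball of
radius `s * r + 1`. -/
theorem not_contDiff_of_norm_eq_one_of_eq_normalize {w : E → E} {r : ℝ}
    (hw_norm : ∀ x, ‖w x‖ = 1) (hw_out : ∀ x, r ≤ ‖x‖ → w x = NormedSpace.normalize x) :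
    ¬ ContDiff ℝ 1 w := by
  intro hw
  have hr : 0 ≤ r := by
    by_contra! hr
    simpa [hw_out 0 (by simpa using hr.le)] using hw_norm 0
  borelize E
  let μ : Measure E := Measure.addHaar
  have hdiff : Differentiable ℝ w := hw.differentiable one_ne_zero
  obtain ⟨K, hK⟩ := hw.contDiffOn.exists_lipschitzOnWith one_ne_zero
    (convex_closedBall (0 : E) (r + 1)) (isCompact_closedBall _ _)
  obtain ⟨q, hq⟩ := exists_polynomial_eval_eq_setIntegral_det (μ := μ)
    (hw.continuous_fderiv one_ne_zero) (isCompact_closedBall (0 : E) r)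
  have hq_eq : q = (Polynomial.C r * Polynomial.X + 1) ^ finrank ℝ E *
      Polynomial.C (μ.real (closedBall 0 1)) := by
    refine Polynomial.eq_of_infinite_eval_eq _ _
      ((Ici_infinite (K * (r + 1) + 2)).mono fun s hs ↦ ?_)
    rw [mem_ofPred_eq, hq,
      setIntegral_det_smul_id_add_fderiv μ hdiff hw_norm hw_out hr hK hs, mul_comm s r]
    simp
  have hq_zero : q.eval 0 = 0 := by
    have hdet : ∀ x, (fderiv ℝ w x).det = 0 := fun x ↦
      det_eq_zero_of_eventually_norm_eq (hdiff x).hasFDerivAt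
        (.of_forall fun y ↦ by rw [hw_norm, hw_norm]) (norm_ne_zero_iff.1 (by simp [hw_norm]))
    simp only [hq, zero_smul, zero_add, hdet, integral_zero]
  have hball : μ.real (closedBall 0 1) ≠ 0 :=
    (ENNReal.toReal_pos (measure_closedBall_pos μ _ one_pos).ne'
      measure_closedBall_lt_top.ne).ne'
  exact hball (by simpa [hq_eq] using hq_zero)

lemma exists_eq_zero_of_contDiff_of_eq_self {u : E → E} {r : ℝ} (hu : ContDiff ℝ 1 u)
    (hu_out : ∀ x, r ≤ ‖x‖ → u x = x) : ∃ x, u x = 0 := by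
  by_contra! hu_ne
  refine not_contDiff_of_norm_eq_one_of_eq_normalize (w := fun x ↦ NormedSpace.normalize (u x))
    (r := r) (fun x ↦ NormedSpace.norm_normalize (hu_ne x)) (fun x hx ↦ by rw [hu_out x hx]) ?_
  exact ((hu.norm ℝ hu_ne).inv fun x ↦ norm_ne_zero_iff.2 (hu_ne x)).smul hu

lemma exists_isFixedPt_of_contDiff_of_norm_le {g : E → E} {R : ℝ} (hg : ContDiff ℝ 1 g)
    (hR : ∀ x, ‖g x‖ ≤ R) : ∃ x, IsFixedPt g x := by
  have hR_nonneg : 0 ≤ R := (norm_nonneg _).trans (hR 0)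
  let η : ContDiffBump (0 : E) := ⟨R + 1, R + 2, by positivity, by linarith⟩
  have hη : ContDiff ℝ 1 η := η.contDiff
  obtain ⟨x, hx⟩ := exists_eq_zero_of_contDiff_of_eq_self (u := fun x ↦ x - η x • g x) (r := R + 2)
    (by fun_prop) fun x hx ↦ by
      simp [η.zero_of_le_dist (x := x) (by simpa using hx)]
  have hx_eq : η x • g x = x := (sub_eq_zero.1 hx).symm
  have hx_norm : ‖x‖ ≤ R := calc
    ‖x‖ = η x * ‖g x‖ := by rw [← Real.norm_of_nonneg (η.nonneg (x := x)), ← norm_smul, hx_eq]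
    _ ≤ ‖g x‖ := mul_le_of_le_one_left (norm_nonneg _) η.le_one
    _ ≤ R := hR x
  have hηx : η x = 1 := η.one_of_mem_closedBall (mem_closedBall_zero_iff.2 (by simp [η]; linarith))
  exact ⟨x, by rwa [hηx, one_smul] at hx_eq⟩

lemma exists_isFixedPt_of_continuous_of_norm_le {g : E → E} {R : ℝ} (hg : Continuous g)
    (hR : ∀ x, ‖g x‖ ≤ R) : ∃ x, IsFixedPt g x := by
  by_contra! hne
  have hR_nonneg : 0 ≤ R := (norm_nonneg _).trans (hR 0)
  have hdist : Continuous fun x ↦ dist x (g x) := by fun_prop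
  obtain ⟨z, -, hz⟩ := (isCompact_closedBall (0 : E) (R + 1)).exists_isMinOn
    (nonempty_closedBall.2 (by positivity)) hdist.continuousOn
  obtain ⟨p, hp, hp_dist, -⟩ := hg.exists_contDiff_approx 1 (ε := fun _ ↦ min 1 (dist z (g z)))
    continuous_const fun _ ↦ lt_min one_pos (dist_pos.2 (hne z ·.symm))
  have hp_norm : ∀ x, ‖p x‖ ≤ R + 1 := fun x ↦ calc
    ‖p x‖ ≤ ‖g x‖ + dist (p x) (g x) := by rw [dist_eq_norm]; exact norm_le_insert' _ _
    _ ≤ R + 1 := add_le_add (hR x) ((hp_dist x).le.trans (min_le_left _ _))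
  obtain ⟨x, hx⟩ := exists_isFixedPt_of_contDiff_of_norm_le hp hp_norm
  have hx_mem : x ∈ closedBall 0 (R + 1) := by
    rw [mem_closedBall_zero_iff, ← hx.eq]
    exact hp_norm x
  have hx_dist : dist x (g x) < dist z (g z) := by
    simpa only [hx.eq] using (hp_dist x).trans_le (min_le_right _ _)
  exact hx_dist.not_ge (hz hx_mem)

end InnerProductSpace

section Brouwer

variable {E F : Type*} [NormedAddCommGroup E] [NormedSpace ℝ E] [FiniteDimensional ℝ E]
  [NormedAddCommGroup F] [NormedSpace ℝ F] [FiniteDimensional ℝ F]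

theorem exists_isFixedPt_of_continuousOn_of_mapsTo_closedBall {g : E → E} {c : E} {r : ℝ}
    (hr : 0 ≤ r) (hg : ContinuousOn g (closedBall c r))
    (hmaps : MapsTo g (closedBall c r) (closedBall c r)) :
    ∃ x ∈ closedBall c r, IsFixedPt g x := by
  obtain rfl | hr_pos := hr.eq_or_lt
  · simp only [closedBall_zero] at hmaps ⊢
    exact ⟨c, rfl, hmaps rfl⟩
  have := instTietzeExtensionClosedBall ℝ c hr_pos
  obtain ⟨G, hG_mem, hG⟩ := ContinuousMap.exists_forall_mem_restrict_eq isClosed_closedBall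
    ⟨_, hg.domRestrict⟩ fun x : closedBall c r ↦ hmaps x.2
  let e := toEuclidean (E := E)
  obtain ⟨R, hR⟩ := ((isCompact_closedBall c r).image e.continuous).isBounded.exists_norm_le
  obtain ⟨y, hy⟩ := exists_isFixedPt_of_continuous_of_norm_le (g := e ∘ G ∘ e.symm) (R := R)
    (by fun_prop) fun y ↦ hR _ (mem_image_of_mem e (hG_mem _))
  have hGy : G (e.symm y) = e.symm y := e.eq_symm_apply.2 hy
  have hy_mem : e.symm y ∈ closedBall c r := hGy ▸ hG_mem _
  have hGg : G (e.symm y) = g (e.symm y) := DFunLike.congr_fun hG ⟨_, hy_mem⟩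
  exact ⟨_, hy_mem, hGg.symm.trans hGy⟩

lemma exists_continuous_dist_lt_forall_ne (hEF : finrank ℝ F < finrank ℝ E) {f : F → E}
    (hf : Continuous f) {ε : ℝ} (hε : 0 < ε) (y : E) :
    ∃ g : F → E, Continuous g ∧ (∀ x, dist (g x) (f x) < ε) ∧ ∀ x, g x ≠ y := by
  obtain ⟨p, hp, hp_dist, -⟩ := hf.exists_contDiff_approx 1 (ε := fun _ ↦ ε / 2)
    continuous_const fun _ ↦ half_pos hε
  obtain ⟨z, hz, hz_dist⟩ :=
    (hp.dense_compl_range_of_finrank_lt_finrank hEF).exists_dist_lt y (half_pos hε)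
  refine ⟨fun x ↦ p x + (y - z), by fun_prop, fun x ↦ ?_,
    fun x (hx : p x + (y - z) = y) ↦ hz ⟨x, ?_⟩⟩
  · calc dist (p x + (y - z)) (f x)
        ≤ dist (p x + (y - z)) (p x) + dist (p x) (f x) := dist_triangle _ _ _
      _ = dist y z + dist (p x) (f x) := by rw [dist_self_add_left, dist_eq_norm y z]
      _ < ε / 2 + ε / 2 := add_lt_add hz_dist (hp_dist x)
      _ = ε := add_halves ε
  · rwa [← add_sub_assoc, add_sub_right_comm, add_eq_right, sub_eq_zero] at hx

/-- If `P` is close to a continuous left inverse of `Φ`, then `x ↦ c + (x - P (Φ x))` maps a ball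
around `c` into itself, and its fixed point satisfies `P (Φ x) = c`. -/
theorem finrank_le_of_continuousOn_of_injOn {Φ : E → F} {U : Set E} (hU : (interior U).Nonempty)
    (hΦ : ContinuousOn Φ U) (hinj : InjOn Φ U) : finrank ℝ E ≤ finrank ℝ F := by
  by_contra! hlt
  obtain ⟨c, hc⟩ := hU
  obtain ⟨r, hr, hball⟩ := nhds_basis_closedBall.mem_iff.1 (mem_interior_iff_mem_nhds.1 hc)
  have : CompactSpace (closedBall c r) := isCompact_iff_compactSpace.1 (isCompact_closedBall c r)
  have hembed : IsClosedEmbedding ((closedBall c r).domRestrict Φ) :=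
    (hΦ.mono hball).domRestrict.isClosedEmbedding (hinj.mono hball).injective
  have : TietzeExtension E := .of_tvs ℝ
  obtain ⟨G, hG⟩ := ContinuousMap.exists_extension' hembed ⟨Subtype.val, continuous_subtype_val⟩
  have hG_inv : ∀ x ∈ closedBall c r, G (Φ x) = x := fun x hx ↦ congrFun hG ⟨x, hx⟩
  obtain ⟨P, hP, hP_dist, hP_ne⟩ := exists_continuous_dist_lt_forall_ne hlt G.continuous hr c
  obtain ⟨x, -, hx⟩ := exists_isFixedPt_of_continuousOn_of_mapsTo_closedBall
    (g := fun x ↦ c + (x - P (Φ x))) (c := c) hr.le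
    (continuousOn_const.add (continuousOn_id.sub (hP.comp_continuousOn (hΦ.mono hball))))
    fun x hx ↦ by
      rw [mem_closedBall, dist_self_add_left, ← dist_eq_norm, dist_comm]
      simpa only [hG_inv x hx] using (hP_dist (Φ x)).le
  refine hP_ne (Φ x) ?_
  rwa [IsFixedPt, ← add_sub_assoc, add_sub_right_comm, add_eq_right, sub_eq_zero, eq_comm] at hx

end Brouwer

section Max

variable {ι α β : Type*} [Fintype ι] [LinearOrder ι] [Nonempty ι] [LinearOrder α]
  [AddCancelCommMonoid β] {φ : α → β}

/-- Replacing the entries above `i` by `x i` in both tuples turns `x i` into the maximum of the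
first one and keeps the two sums equal. -/
lemma le_of_sum_eq_of_forall_gt
    (hφ : FactorsThrough (fun x : ι → α ↦ Finset.univ.sup' Finset.univ_nonempty x)
      fun x ↦ ∑ j, φ (x j))
    {x y : ι → α} (hx : Monotone x) (hsum : ∑ j, φ (x j) = ∑ j, φ (y j)) {i : ι}
    (hi : ∀ j, i < j → x j = y j) : y i ≤ x i := by
  let truncate (z : ι → α) : ι → α := fun j ↦ if j ≤ i then z j else x i
  have hsum_split (z : ι → α) : ∑ j, φ (truncate z j) =
      ∑ j with j ≤ i, φ (z j) + ∑ j with ¬ j ≤ i, φ (x i) := by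
    simp only [truncate, apply_ite φ, Finset.sum_ite]
  have hsum_low : ∑ j with j ≤ i, φ (x j) = ∑ j with j ≤ i, φ (y j) := by
    have hsum_high : ∑ j with ¬ j ≤ i, φ (x j) = ∑ j with ¬ j ≤ i, φ (y j) :=
      Finset.sum_congr rfl fun j hj ↦ by rw [hi j (not_le.1 (Finset.mem_filter.1 hj).2)]
    refine add_right_cancel (b := ∑ j with ¬ j ≤ i, φ (y j)) ?_
    rw [← hsum_high, Finset.sum_filter_add_sum_filter_not, hsum_high,
      Finset.sum_filter_add_sum_filter_not, hsum]
  calc y i = truncate y i := (if_pos le_rfl).symm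
    _ ≤ Finset.univ.sup' Finset.univ_nonempty (truncate y) :=
      Finset.le_sup' (truncate y) (Finset.mem_univ i)
    _ = Finset.univ.sup' Finset.univ_nonempty (truncate x) :=
      hφ (by simp only [hsum_split, hsum_low])
    _ ≤ x i := Finset.sup'_le _ _ fun j _ ↦ by
      by_cases hj : j ≤ i
      · simpa only [truncate, if_pos hj] using hx hj
      · simp only [truncate, if_neg hj, le_refl]

lemma injOn_sum_setOf_monotone
    (hφ : FactorsThrough (fun x : ι → α ↦ Finset.univ.sup' Finset.univ_nonempty x)
      fun x ↦ ∑ j, φ (x j)) :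
    InjOn (fun x : ι → α ↦ ∑ j, φ (x j)) {x | Monotone x} := by
  refine fun x hx y hy hsum ↦ funext fun i ↦ ?_
  induction i using WellFoundedGT.induction with
  | ind i ih =>
    exact le_antisymm (le_of_sum_eq_of_forall_gt hφ hy hsum.symm fun j hj ↦ (ih j hj).symm)
      (le_of_sum_eq_of_forall_gt hφ hx hsum ih)

end Max

lemma isOpen_setOf_strictMono {ι α : Type*} [Finite ι] [Preorder ι] [LinearOrder α]
    [TopologicalSpace α] [OrderClosedTopology α] : IsOpen {x : ι → α | StrictMono x} := by
  simp only [StrictMono, ofPred_forall]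
  exact isOpen_iInter_of_finite fun i ↦ isOpen_iInter_of_finite fun j ↦
    isOpen_iInter_of_finite fun _ ↦ isOpen_lt (continuous_apply i) (continuous_apply j)

lemma interior_setOf_monotone_nonempty (n : ℕ) :
    (interior {x : Fin n → ℝ | Monotone x}).Nonempty :=
  ⟨fun i ↦ i, interior_maximal (fun _ hx ↦ StrictMono.monotone hx) isOpen_setOf_strictMono
    fun _ _ hij ↦ Nat.cast_lt.2 hij⟩

theorem exists_not_continuously_sum_decomposable_general {F : Type*} [NormedAddCommGroup F]
    [NormedSpace ℝ F] [FiniteDimensional ℝ F] {M : ℕ} (hFM : finrank ℝ F < M) :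
    ∃ f : (Fin M → ℝ) → ℝ,
      Continuous f ∧
      (∀ (π : Equiv.Perm (Fin M)) (x : Fin M → ℝ), f (x ∘ π) = f x) ∧
      ∀ (φ : ℝ → F) (ρ : F → ℝ), Continuous φ → ∃ x : Fin M → ℝ, f x ≠ ρ (∑ i, φ (x i)) := by
  have : Nonempty (Fin M) := Fin.pos_iff_nonempty.1 (Nat.zero_lt_of_lt hFM)
  refine ⟨fun x ↦ Finset.univ.sup' Finset.univ_nonempty x,
    .finset_sup'_apply _ fun i _ ↦ continuous_apply i, fun π x ↦ ?_, fun φ ρ hφ ↦ ?_⟩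
  · simpa only [Finset.sup'_univ_eq_ciSup, comp_apply] using π.iSup_comp (g := x)
  · by_contra! hρ
    have hinj : InjOn (fun x : Fin M → ℝ ↦ ∑ i, φ (x i)) {x | Monotone x} :=
      injOn_sum_setOf_monotone fun x y hxy ↦ by simp only [hρ, hxy]
    have hle := finrank_le_of_continuousOn_of_injOn (interior_setOf_monotone_nonempty M)
      (by fun_prop) hinj
    exact hFM.not_ge (by simpa only [finrank_fin_fun] using hle)

/-- For `M > N ≥ 1` there exists a continuous permutation-invariant function
`f : ℝ^M → ℝ` that is not continuously sum-decomposable via `ℝ^N`. -/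
theorem exists_not_continuously_sum_decomposable (M N : ℕ) (hN : 1 ≤ N) (hMN : N < M) :
    ∃ f : (Fin M → ℝ) → ℝ,
      Continuous f ∧
      (∀ (π : Equiv.Perm (Fin M)) (x : Fin M → ℝ), f (x ∘ π) = f x) ∧
      ∀ (φ : ℝ → (Fin N → ℝ)) (ρ : (Fin N → ℝ) → ℝ),
        Continuous φ → Continuous ρ →
          ∃ x : Fin M → ℝ, f x ≠ ρ (∑ i, φ (x i)) := by
  obtain ⟨f, hf, hsymm, hne⟩ := exists_not_continuously_sum_decomposable_general
    (F := Fin N → ℝ) (by simpa only [finrank_fin_fun] using hMN)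
  exact ⟨f, hf, hsymm, fun φ ρ hφ _ ↦ hne φ ρ hφ⟩
end

section
/- Let M, N ∈ ℕ with M > N ≥ 1. Then there exists a continuous permutation-invariant function f : ℝ^M → ℝ that is not max-decomposable via ℝ^N: for every pair of functions φ : ℝ → ℝ^N and ρ : ℝ^N → ℝ there exists x ∈ ℝ^M with f(x) ≠ ρ(max_{1 ≤ i ≤ M} φ(x_i)), where the maximum over i is taken independently in each of the N coordinates. -/
/-!
Each latent coordinate of `max_i φ(x_i)` is attained at some entry of `x`, so `N < M` coordinates
leave an entry `x_k` that none of them needs; overwriting `x_k` by another entry of `x` does not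
change the maximum. Let `f x` be the Hausdorff distance from `{x_1, …, x_M}` to a set
`{p_1, …, p_M}` of distinct points. It vanishes at `x = p`, but no longer once `p_k` is overwritten
by another `p_i`. A sum would detect the overwriting too, but for `M ≥ 3` it is not
max-decomposable already because it counts multiplicities, to which maxima are blind; the
Hausdorff distance depends only on the set of entries, so here the latent dimension is the
obstruction.
-/

open Function Set
open Finset (univ mem_univ univ_nonempty sup'_le le_sup' sup'_apply)

variable {ι X : Type*}

section Maximum

variable [Fintype ι]

/-- `f` is max-decomposable via the join-semilattice `L`. Decomposability via `ℝ^N` is the case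
`L = Fin N → ℝ`, whose join is the coordinatewise maximum. -/
def IsMaxDecomposable {Y : Type*} [Nonempty ι] (L : Type*) [SemilatticeSup L]
    (f : (ι → X) → Y) : Prop :=
  ∃ (φ : X → L) (ρ : L → Y), ∀ x, f x = ρ (univ.sup' univ_nonempty (φ ∘ x))

variable {κ : Type*} [Fintype κ] {L : κ → Type*} [∀ j, LinearOrder (L j)]

theorem exists_forall_exists_ne_le (h : Fintype.card κ < Fintype.card ι) (v : ι → ∀ j, L j) :
    ∃ k, ∀ i j, ∃ i' ≠ k, v i j ≤ v i' j := by
  have : Nonempty ι := Fintype.card_pos_iff.mp (Nat.zero_lt_of_lt h)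
  choose a ha using fun j => Finite.exists_max (v · j)
  have not_surjective : ¬ Surjective a := fun hs => h.not_ge (Fintype.card_le_of_surjective a hs)
  obtain ⟨k, hk⟩ := not_forall.mp not_surjective
  exact ⟨k, fun i j => ⟨a j, fun hj => hk ⟨j, hj⟩, ha j i⟩⟩

theorem exists_forall_sup'_update_eq [Nonempty ι] [DecidableEq ι]
    (h : Fintype.card κ < Fintype.card ι) (v : ι → ∀ j, L j) :
    ∃ k, ∀ i, univ.sup' univ_nonempty (update v k (v i)) = univ.sup' univ_nonempty v := by
  obtain ⟨k, hk⟩ := exists_forall_exists_ne_le h v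
  refine ⟨k, fun i => le_antisymm (sup'_le _ _ fun l _ => ?_) (sup'_le _ _ fun l _ j => ?_)⟩
  · obtain rfl | hl := eq_or_ne l k
    · simpa only [update_self] using le_sup' v (mem_univ i)
    · simpa only [update_of_ne hl] using le_sup' v (mem_univ l)
  · obtain ⟨l', hl', hle⟩ := hk l j
    calc v l j ≤ v l' j := hle
      _ = update v k (v i) l' j := by rw [update_of_ne hl']
      _ ≤ univ.sup' univ_nonempty (update v k (v i)) j :=
        le_sup' (update v k (v i)) (mem_univ l') j

theorem IsMaxDecomposable.exists_forall_update_eq {Y : Type*} [Nonempty ι] [DecidableEq ι]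
    {f : (ι → X) → Y} (hf : IsMaxDecomposable (∀ j, L j) f)
    (h : Fintype.card κ < Fintype.card ι) (x : ι → X) :
    ∃ k, ∀ i, f (update x k (x i)) = f x := by
  obtain ⟨φ, ρ, hf⟩ := hf
  obtain ⟨k, hk⟩ := exists_forall_sup'_update_eq h (φ ∘ x)
  exact ⟨k, fun i => by rw [hf, hf, comp_update, ← hk i, comp_apply]⟩

end Maximum

section HausdorffDistance

open Metric

theorem hausdorffDist_range_le_dist [Fintype ι] [PseudoMetricSpace X] (x y : ι → X) :
    hausdorffDist (range x) (range y) ≤ dist x y := by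
  refine hausdorffDist_le_of_mem_dist dist_nonneg ?_ ?_
  · rintro _ ⟨i, rfl⟩
    exact ⟨y i, mem_range_self i, dist_le_pi_dist x y i⟩
  · rintro _ ⟨i, rfl⟩
    exact ⟨x i, mem_range_self i, dist_comm x y ▸ dist_le_pi_dist y x i⟩

theorem hausdorffEDist_range_ne_top [Finite ι] [Nonempty ι] [PseudoMetricSpace X] (x y : ι → X) :
    hausdorffEDist (range x) (range y) ≠ ⊤ :=
  hausdorffEDist_ne_top_of_nonempty_of_bounded (range_nonempty x) (range_nonempty y)
    (finite_range x).isBounded (finite_range y).isBounded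

theorem lipschitzWith_hausdorffDist_range [Fintype ι] [Nonempty ι] [PseudoMetricSpace X]
    (s : Set X) : LipschitzWith 1 fun x : ι → X => hausdorffDist (range x) s :=
  .of_le_add fun x y =>
    calc hausdorffDist (range x) s
      _ ≤ hausdorffDist (range x) (range y) + hausdorffDist (range y) s :=
        hausdorffDist_triangle (hausdorffEDist_range_ne_top x y)
      _ ≤ dist x y + hausdorffDist (range y) s := by
        gcongr
        exact hausdorffDist_range_le_dist x y
      _ = hausdorffDist (range y) s + dist x y := add_comm _ _

theorem hausdorffDist_range_eq_zero_iff [Finite ι] [Nonempty ι] [MetricSpace X] {x y : ι → X} :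
    hausdorffDist (range x) (range y) = 0 ↔ range x = range y :=
  (finite_range x).isClosed.hausdorffDist_zero_iff_eq (finite_range y).isClosed
    (hausdorffEDist_range_ne_top x y)

theorem notMem_range_update [DecidableEq ι] {p : ι → X} (hp : Injective p) {i k : ι}
    (hik : i ≠ k) : p k ∉ range (update p k (p i)) := by
  rintro ⟨l, hl⟩
  obtain rfl | hlk := eq_or_ne l k
  · exact hik (hp (by rwa [update_self] at hl))
  · exact hlk (hp (by rwa [update_of_ne hlk] at hl))

theorem not_isMaxDecomposable_hausdorffDist_range [Fintype ι] [Nontrivial ι] [MetricSpace X]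
    {κ : Type*} [Fintype κ] {L : κ → Type*} [∀ j, LinearOrder (L j)]
    (h : Fintype.card κ < Fintype.card ι) {p : ι → X} (hp : Injective p) :
    ¬ IsMaxDecomposable (∀ j, L j) fun x : ι → X => hausdorffDist (range x) (range p) := by
  classical
  intro hdec
  obtain ⟨k, hk⟩ := hdec.exists_forall_update_eq h p
  obtain ⟨i, hik⟩ := exists_ne k
  have range_eq : range (update p k (p i)) = range p :=
    hausdorffDist_range_eq_zero_iff.mp ((hk i).trans hausdorffDist_self_zero)
  exact notMem_range_update hp hik (range_eq ▸ mem_range_self k)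

end HausdorffDistance

theorem exists_not_max_decomposable_general [Fintype ι] [Nontrivial ι] [MetricSpace X]
    {κ : Type*} [Fintype κ] {L : κ → Type*} [∀ j, LinearOrder (L j)]
    (h : Fintype.card κ < Fintype.card ι) (hX : Nonempty (ι ↪ X)) :
    ∃ f : (ι → X) → ℝ, Continuous f ∧ (∀ x y, range x = range y → f x = f y) ∧
      ¬ IsMaxDecomposable (∀ j, L j) f := by
  obtain ⟨p⟩ := hX
  exact ⟨fun x => Metric.hausdorffDist (range x) (range p),
    (lipschitzWith_hausdorffDist_range _).continuous, fun x y hxy => by simp only [hxy],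
    not_isMaxDecomposable_hausdorffDist_range h p.injective⟩

/-- For `M > N ≥ 1` there exists a continuous permutation-invariant function
`f : ℝ^M → ℝ` that is not max-decomposable via `ℝ^N`, where the max over the
elements is taken independently in each latent coordinate. -/
theorem exists_not_max_decomposable (M N : ℕ) (hN : 1 ≤ N) (hMN : N < M) :
    ∃ f : (Fin M → ℝ) → ℝ,
      Continuous f ∧
      (∀ (π : Equiv.Perm (Fin M)) (x : Fin M → ℝ), f (x ∘ π) = f x) ∧
      ∀ (φ : ℝ → (Fin N → ℝ)) (ρ : (Fin N → ℝ) → ℝ),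
        ∃ x : Fin M → ℝ,
          f x ≠ ρ (fun j =>
            Finset.univ.sup' ⟨⟨0, by omega⟩, Finset.mem_univ _⟩
              (fun i : Fin M => φ (x i) j)) := by
  have : Nontrivial (Fin M) := Fin.nontrivial_iff_two_le.mpr (by omega)
  obtain ⟨f, continuous_f, f_range, hf⟩ :=
    exists_not_max_decomposable_general (L := fun _ : Fin N => ℝ) (by simpa using hMN)
      ⟨Fin.valEmbedding.trans (Infinite.natEmbedding ℝ)⟩
  refine ⟨f, continuous_f, fun π x => f_range _ _ (π.surjective.range_comp x), fun φ ρ => ?_⟩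
  by_contra! hdec
  exact hf ⟨φ, ρ, fun x => (hdec x).trans (congrArg ρ (funext fun j => by simp [sup'_apply]))⟩
end
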